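/- arXiv:2305.10416 — 2 statements merged into one kernel-verified Lean document; each statement's English description precedes it below -/
import Mathlib

section
/- Fix d ≥ 1 and privacy levels α_1,...,α_d ≥ 0. Let P and P̃ be probability laws of random vectors X = (X^1,...,X^d) and X̃ = (X̃^1,...,X̃^d) on ∏_j X^j, and let M, M̃ be the laws of the componentwise privatized views Z, Z̃ obtained by passing each component X^j independently through an α_j-LDP channel Q^j. Assume additionally that for every strict subset S ⊊ {1,...,d}, the marginal laws coincide: Law(X^{(S)}) = Law(X̃^{(S)}). Then d_{KL}(M, M̃) ≤ (∏_{j=1}^d (e^{α_j} − 1))² · d_{TV}(P, P̃)². -/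
open MeasureTheory Real

/-- Total variation `∫ |dP − dPt|` (twice the usual TV distance). -/
noncomputable def dTV {W : Type*} [MeasurableSpace W] (P Pt : Measure W)
    [IsFiniteMeasure P] [IsFiniteMeasure Pt] : ℝ :=
  (((P.toSignedMeasure - Pt.toSignedMeasure).totalVariation) Set.univ).toReal

/-- Kullback–Leibler divergence `d_KL(M, Mt) = ∫ log (dMt/dM) dMt`. -/
noncomputable def dKL {W : Type*} [MeasurableSpace W] (M Mt : Measure W) : ℝ :=
  ∫ z, Real.log ((Mt.rnDeriv M z).toReal) ∂Mt

lemma aux_density {W : Type*} [MeasurableSpace W] (μ ν : Measure W) [IsFiniteMeasure μ]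
    [IsFiniteMeasure ν] (c : ℝ) (hc : 0 ≤ c)
    (h : ∀ A, MeasurableSet A → |μ.real A - ν.real A| ≤ c * ν.real A) :
    ∃ f : W → ℝ, Measurable f ∧ (∀ z, 0 ≤ f z) ∧ (∀ z, |f z - 1| ≤ c) ∧
      μ = ν.withDensity (fun z => ENNReal.ofReal (f z)) := by
  have hac : μ ≪ ν := by
    refine Measure.AbsolutelyContinuous.mk fun s hs h0 => ?_
    have h1 := h s hs
    have h2 : ν.real s = 0 := by simp [measureReal_def, h0]
    rw [h2] at h1
    have h3 : μ.real s = 0 := by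
      simpa using h1
    exact (measureReal_eq_zero_iff).1 h3
  have hint : Integrable (fun z => (μ.rnDeriv ν z).toReal) ν := Measure.integrable_toReal_rnDeriv
  have hup : (fun z => (μ.rnDeriv ν z).toReal) ≤ᵐ[ν] fun _ => 1 + c := by
    refine ae_le_of_forall_setIntegral_le hint (integrable_const _) fun s hs _ => ?_
    rw [Measure.setIntegral_toReal_rnDeriv hac]
    have := abs_le.1 (h s hs)
    simp
    linarith [this.2]
  have hlo : (fun _ => 1 - c) ≤ᵐ[ν] (fun z => (μ.rnDeriv ν z).toReal) := by
    refine ae_le_of_forall_setIntegral_le (integrable_const _) hint fun s hs _ => ?_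
    rw [Measure.setIntegral_toReal_rnDeriv hac]
    have := abs_le.1 (h s hs)
    simp
    linarith [this.1]
  have hm : Measurable (fun z => (μ.rnDeriv ν z).toReal) :=
    (Measure.measurable_rnDeriv μ ν).ennreal_toReal
  classical
  refine ⟨fun z => if |(μ.rnDeriv ν z).toReal - 1| ≤ c then (μ.rnDeriv ν z).toReal else 1,
    ?_, ?_, ?_, ?_⟩
  · refine Measurable.ite ?_ hm measurable_const
    exact measurableSet_le ((hm.sub measurable_const).abs) measurable_const
  · intro z
    dsimp only
    split_ifs
    · exact ENNReal.toReal_nonneg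
    · exact zero_le_one
  · intro z
    dsimp only
    split_ifs with h1
    · exact h1
    · simpa using hc
  · conv_lhs => rw [← Measure.withDensity_rnDeriv_eq μ ν hac]
    refine withDensity_congr_ae ?_
    filter_upwards [hup, hlo, Measure.rnDeriv_ne_top μ ν] with z h1 h2 h3
    rw [if_pos (abs_le.2 ⟨by linarith, by linarith⟩), ENNReal.ofReal_toReal h3]

lemma aux_pi {ι : Type*} [Fintype ι] {Z : ι → Type*} [∀ j, MeasurableSpace (Z j)]
    (μ ν : ∀ j, Measure (Z j)) [∀ j, IsProbabilityMeasure (μ j)] [∀ j, IsProbabilityMeasure (ν j)]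
    (f : ∀ j, Z j → ℝ) (hf : ∀ j, Measurable (f j)) (h0 : ∀ j z, 0 ≤ f j z) (c : ι → ℝ)
    (hc : ∀ j z, f j z ≤ c j)
    (h : ∀ j, μ j = (ν j).withDensity (fun z => ENNReal.ofReal (f j z))) :
    Integrable (fun z : ∀ j, Z j => ∏ j, f j (z j)) (Measure.pi ν) ∧
    ∀ A, MeasurableSet A → (Measure.pi μ).real A = ∫ z in A, ∏ j, f j (z j) ∂(Measure.pi ν) := by
  have hmeas : Measurable (fun z : ∀ j, Z j => ∏ j, f j (z j)) :=
    Finset.measurable_prod _ fun j _ => (hf j).comp (measurable_pi_apply j)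
  have hnn : ∀ z : ∀ j, Z j, 0 ≤ ∏ j, f j (z j) := fun z => Finset.prod_nonneg fun j _ => h0 j _
  have hI : Integrable (fun z : ∀ j, Z j => ∏ j, f j (z j)) (Measure.pi ν) := by
    refine Integrable.of_bound hmeas.aestronglyMeasurable (∏ j, c j) (ae_of_all _ fun z => ?_)
    rw [Real.norm_of_nonneg (hnn z)]
    exact Finset.prod_le_prod (fun j _ => h0 j _) fun j _ => hc j _
  have hI1 : ∀ j, Integrable (f j) (ν j) := fun j => by
    refine Integrable.of_bound (hf j).aestronglyMeasurable (c j) (ae_of_all _ fun z => ?_)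
    rw [Real.norm_of_nonneg (h0 j z)]
    exact hc j z
  have key : Measure.pi μ =
      (Measure.pi ν).withDensity (fun z => ENNReal.ofReal (∏ j, f j (z j))) := by
    refine Measure.pi_eq fun s hs => ?_
    rw [withDensity_apply _ (MeasurableSet.univ_pi hs),
      ← ofReal_integral_eq_lintegral_ofReal hI.integrableOn (ae_of_all _ hnn),
      Measure.restrict_pi_pi, integral_fintype_prod_eq_prod,
      ENNReal.ofReal_prod_of_nonneg
        (fun j _ => integral_nonneg (h0 j))]
    refine Finset.prod_congr rfl fun j _ => ?_
    rw [h j, withDensity_apply _ (hs j),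
      ofReal_integral_eq_lintegral_ofReal (hI1 j).integrableOn (ae_of_all _ (h0 j))]
  refine ⟨hI, fun A hA => ?_⟩
  rw [key, measureReal_def, withDensity_apply _ hA,
    ← ofReal_integral_eq_lintegral_ofReal hI.integrableOn (ae_of_all _ hnn),
    ENNReal.toReal_ofReal (integral_nonneg hnn)]

lemma aux_core {ι : Type*} [Fintype ι] [DecidableEq ι] {Z : ι → Type*} [∀ j, MeasurableSpace (Z j)]
    (μ ν : ∀ j, Measure (Z j)) [∀ j, IsProbabilityMeasure (μ j)] [∀ j, IsProbabilityMeasure (ν j)]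
    (c : ι → ℝ) (hc : ∀ j, 0 ≤ c j)
    (h : ∀ j A, MeasurableSet A → |(μ j).real A - (ν j).real A| ≤ c j * (ν j).real A)
    (A : Set (∀ j, Z j)) (hA : MeasurableSet A) :
    |∑ t : Finset ι, (-1 : ℝ) ^ t.card *
      (Measure.pi (fun j => if j ∈ t then ν j else μ j)).real A|
      ≤ (∏ j, c j) * (Measure.pi ν).real A := by
  choose f hf h0 hfc hd using fun j => aux_density (μ j) (ν j) (c j) (hc j) (h j)
  have hP : ∀ (t : Finset ι) j, IsProbabilityMeasure (if j ∈ t then ν j else μ j) := by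
    intro t j; split_ifs <;> infer_instance
  have hI := fun t : Finset ι => aux_pi (fun j => if j ∈ t then ν j else μ j) ν
    (fun j => if j ∈ t then 1 else f j)
    (fun j => by split_ifs; exacts [measurable_one, hf j])
    (fun j z => by split_ifs; exacts [zero_le_one, h0 j z])
    (fun j => 1 + c j)
    (fun j z => by
      split_ifs
      · simpa using hc j
      · linarith [(abs_le.1 (hfc j z)).2])
    (fun j => by
      split_ifs
      · simp
      · exact hd j)
  have e : ∑ t : Finset ι, (-1 : ℝ) ^ t.card *
      (Measure.pi (fun j => if j ∈ t then ν j else μ j)).real A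
      = ∫ z in A, ∏ j, (f j (z j) - 1) ∂(Measure.pi ν) := by
    have e1 : ∀ z : ∀ j, Z j, ∏ j, (f j (z j) - 1) = ∑ t : Finset ι, (-1 : ℝ) ^ t.card *
        ∏ j, (if j ∈ t then (1 : Z j → ℝ) else f j) (z j) := fun z => by
      rw [Finset.prod_sub (fun j => f j (z j)) (fun _ => 1), Finset.powerset_univ]
      refine Finset.sum_congr rfl fun t _ => ?_
      rw [Finset.prod_const_one, mul_one]
      congr 1
      rw [← Finset.compl_eq_univ_sdiff, ← Finset.prod_mul_prod_compl t
        (fun j => (if j ∈ t then (1 : Z j → ℝ) else f j) (z j))]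
      rw [Finset.prod_eq_one (s := t), one_mul]
      · refine Finset.prod_congr rfl fun j hj => ?_
        rw [if_neg (Finset.mem_compl.1 hj)]
      · intro j hj
        rw [if_pos hj, Pi.one_apply]
    simp_rw [e1]
    rw [integral_finsetSum]
    · refine Finset.sum_congr rfl fun t _ => ?_
      rw [integral_const_mul, (hI t).2 A hA]
    · intro t _
      exact ((hI t).1.integrableOn).const_mul _
  rw [e]
  have := norm_setIntegral_le_of_norm_le_const (μ := Measure.pi ν) (s := A)
    (f := fun z => ∏ j, (f j (z j) - 1)) (C := ∏ j, c j) (measure_lt_top _ _) (fun z _ => by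
      rw [Real.norm_eq_abs, Finset.abs_prod]
      exact Finset.prod_le_prod (fun j _ => abs_nonneg _) fun j _ => hfc j _)
  rwa [Real.norm_eq_abs] at this

lemma aux_tv {W : Type*} [MeasurableSpace W] (P Pt : Measure W)
    [IsFiniteMeasure P] [IsFiniteMeasure Pt] (g : W → ℝ) (hg : Measurable g) (B : ℝ)
    (hB : ∀ x, |g x| ≤ B) : |∫ x, g x ∂Pt - ∫ x, g x ∂P| ≤ B * dTV P Pt := by
  set s := P.toSignedMeasure - Pt.toSignedMeasure with hs
  set p := s.toJordanDecomposition.posPart with hp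
  set n := s.toJordanDecomposition.negPart with hn
  have e : P + n = Pt + p := by
    rw [← Measure.toSignedMeasure_eq_toSignedMeasure_iff, Measure.toSignedMeasure_add,
      Measure.toSignedMeasure_add]
    have : s = p.toSignedMeasure - n.toSignedMeasure :=
      (SignedMeasure.toSignedMeasure_toJordanDecomposition s).symm
    have this := hs.symm.trans this
    rw [sub_eq_sub_iff_add_eq_add] at this
    rw [this, add_comm]
  have hI : ∀ (m : Measure W) [IsFiniteMeasure m], Integrable g m := fun m _ =>
    Integrable.of_bound hg.aestronglyMeasurable B (ae_of_all _ hB)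
  have e2 : ∫ x, g x ∂P + ∫ x, g x ∂n = ∫ x, g x ∂Pt + ∫ x, g x ∂p := by
    rw [← integral_add_measure (hI _) (hI _), ← integral_add_measure (hI _) (hI _), e]
  have b : ∀ (m : Measure W) [IsFiniteMeasure m], |∫ x, g x ∂m| ≤ B * m.real Set.univ := fun m _ => by
    have := norm_integral_le_of_norm_le_const (μ := m) (f := g) (C := B) (ae_of_all _ hB)
    rwa [Real.norm_eq_abs] at this
  have hT : dTV P Pt = p.real Set.univ + n.real Set.univ := by
    rw [dTV, ← hs, SignedMeasure.totalVariation, ← hp, ← hn, ← measureReal_def,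
      measureReal_add_apply]
  rw [hT]
  have b1 := abs_le.1 (b p)
  have b2 := abs_le.1 (b n)
  rw [abs_le]
  constructor <;> linarith [b1.1, b1.2, b2.1, b2.2]

lemma aux_kl {W : Type*} [MeasurableSpace W] (M Mt : Measure W)
    [IsProbabilityMeasure M] [IsProbabilityMeasure Mt] (c : ℝ) (hc : 0 ≤ c)
    (h : ∀ A, MeasurableSet A → |Mt.real A - M.real A| ≤ c * M.real A) :
    dKL M Mt ≤ c ^ 2 := by
  obtain ⟨f, hf, h0, hfc, hd⟩ := aux_density Mt M c hc h
  have hfm : Measurable (fun z => ENNReal.ofReal (f z)) := hf.ennreal_ofReal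
  have hfI : Integrable f M := Integrable.of_bound hf.aestronglyMeasurable (1 + c)
    (ae_of_all _ fun z => by
      rw [Real.norm_of_nonneg (h0 z)]; linarith [(abs_le.1 (hfc z)).2])
  have h1 : ∫ z, f z ∂M = 1 := by
    have : Mt Set.univ = 1 := measure_univ
    rw [hd, withDensity_apply _ MeasurableSet.univ, Measure.restrict_univ,
      ← ofReal_integral_eq_lintegral_ofReal hfI (ae_of_all _ h0)] at this
    simpa using this
  have hae : Mt.rnDeriv M =ᵐ[M] fun z => ENNReal.ofReal (f z) := by
    conv_lhs => rw [hd]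
    exact Measure.rnDeriv_withDensity M hfm
  have hac : Mt ≪ M := by rw [hd]; exact withDensity_absolutelyContinuous _ _
  have e1 : dKL M Mt = ∫ z, Real.log (f z) ∂Mt := by
    refine integral_congr_ae ?_
    filter_upwards [hac.ae_le hae] with z hz
    rw [hz, ENNReal.toReal_ofReal (h0 z)]
  have e2 : dKL M Mt = ∫ z, f z * Real.log (f z) ∂M := by
    rw [e1, hd, integral_withDensity_eq_integral_toReal_smul hfm
      (ae_of_all _ fun z => ENNReal.ofReal_lt_top)]
    refine integral_congr_ae (ae_of_all _ fun z => ?_)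
    simp [ENNReal.toReal_ofReal (h0 z)]
  have hsq : Integrable (fun z => (f z - 1) ^ 2) M := by
    refine Integrable.of_bound ((hf.sub measurable_const).pow_const 2).aestronglyMeasurable (c ^ 2)
      (ae_of_all _ fun z => ?_)
    rw [Real.norm_of_nonneg (sq_nonneg _)]
    exact sq_le_sq' (by linarith [(abs_le.1 (hfc z)).1]) (abs_le.1 (hfc z)).2
  have hle : ∀ z, f z * Real.log (f z) ≤ (f z - 1) ^ 2 + (f z - 1) := fun z => by
    rcases (h0 z).eq_or_lt with hz | hz
    · rw [← hz]; norm_num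
    · have := mul_le_mul_of_nonneg_left (Real.log_le_sub_one_of_pos hz) hz.le
      linarith [this]
  have hge : ∀ z, f z - 1 ≤ f z * Real.log (f z) := fun z => by
    rcases (h0 z).eq_or_lt with hz | hz
    · rw [← hz]; norm_num
    · have := mul_le_mul_of_nonneg_left (Real.one_sub_inv_le_log_of_pos hz) hz.le
      rw [mul_sub, mul_inv_cancel₀ hz.ne'] at this
      linarith [this]
  have hf1 : Integrable (fun z => f z - 1) M := hfI.sub (integrable_const _)
  have hli : Integrable (fun z => f z * Real.log (f z)) M :=
    integrable_of_le_of_le (hf.mul hf.log).aestronglyMeasurable (ae_of_all _ hge)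
      (ae_of_all _ hle) hf1 (hsq.add hf1)
  calc dKL M Mt = ∫ z, f z * Real.log (f z) ∂M := e2
    _ ≤ ∫ z, ((f z - 1) ^ 2 + (f z - 1)) ∂M := integral_mono hli (hsq.add hf1) hle
    _ = ∫ z, (f z - 1) ^ 2 ∂M := by
        rw [integral_add hsq hf1, integral_sub hfI (integrable_const _), h1]; simp
    _ ≤ ∫ z, c ^ 2 ∂M := by
        refine integral_mono hsq (integrable_const _) fun z => ?_
        exact sq_le_sq' (by linarith [(abs_le.1 (hfc z)).1]) (abs_le.1 (hfc z)).2
    _ = c ^ 2 := by simp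

/-- Corollary `cor: main`: componentwise `α`-LDP privatization of
`P` and `Pt`, whose strict-subset marginals all coincide, contracts the KL
divergence of the privatized laws to
`(∏ j (e^{α_j} − 1))² · d_TV(P, Pt)²`. -/
theorem stmt_6 {d : ℕ} (hd : 1 ≤ d) (X Z : Fin d → Type*)
    [∀ j, MeasurableSpace (X j)] [∀ j, MeasurableSpace (Z j)]
    (α : Fin d → ℝ) (hα : ∀ j, 0 ≤ α j)
    (Q : (j : Fin d) → X j → Measure (Z j))
    [hMarkov : ∀ j x, IsProbabilityMeasure (Q j x)]
    (hker : ∀ j (A : Set (Z j)), MeasurableSet A → Measurable fun x => Q j x A)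
    (hLDP : ∀ j (x x' : X j) (A : Set (Z j)), MeasurableSet A →
      Q j x A ≤ ENNReal.ofReal (Real.exp (α j)) * Q j x' A)
    (P Pt : Measure (∀ j, X j)) [IsProbabilityMeasure P] [IsProbabilityMeasure Pt]
    (hmarg : ∀ S : Set (Fin d), S ≠ Set.univ →
      P.map (fun x (j : S) => x j) = Pt.map (fun x (j : S) => x j)) :
    dKL (P.bind fun x => Measure.pi fun j => Q j (x j))
        (Pt.bind fun x => Measure.pi fun j => Q j (x j))
      ≤ (∏ j, (Real.exp (α j) - 1)) ^ 2 * (dTV P Pt) ^ 2 := by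
  classical
  set K : (∀ j, X j) → Measure (∀ j, Z j) := fun x => Measure.pi fun j => Q j (x j) with hK
  have hKp : ∀ x, IsProbabilityMeasure (K x) := fun x => by rw [hK]; infer_instance
  have hKm : Measurable K := by
    refine Measurable.measure_of_isPiSystem_of_isProbabilityMeasure generateFrom_pi.symm
      isPiSystem_pi ?_
    rintro _ ⟨s, hs, rfl⟩
    simp only [hK, Measure.pi_pi]
    refine Finset.measurable_prod _ fun j _ => ?_
    exact (hker j (s j) (hs j (Set.mem_univ j))).comp (measurable_pi_apply j)
  have hKA : ∀ A, MeasurableSet A → Measurable fun x => (K x).real A := fun A hA =>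
    ((Measure.measurable_coe hA).comp hKm).ennreal_toReal
  have hKint : ∀ (m : Measure (∀ j, X j)) [IsProbabilityMeasure m] A, MeasurableSet A →
      (m.bind K).real A = ∫ x, (K x).real A ∂m := fun m _ A hA => by
    rw [measureReal_def, Measure.bind_apply hA hKm.aemeasurable]
    simp only [measureReal_def]
    exact (integral_toReal ((Measure.measurable_coe hA).comp hKm).aemeasurable
      (ae_of_all _ fun x => measure_lt_top _ _)).symm
  have hb : ∀ (m : Measure (∀ j, X j)) [IsProbabilityMeasure m],
      IsProbabilityMeasure (m.bind K) := fun m _ => by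
    constructor
    rw [Measure.bind_apply MeasurableSet.univ hKm.aemeasurable]
    simp
  have := hb P
  have := hb Pt
  have hc : ∀ j, 0 ≤ Real.exp (α j) - 1 := fun j => by
    linarith [Real.one_le_exp (hα j)]
  have hQ : ∀ j (x x' : X j) (A : Set (Z j)), MeasurableSet A →
      |(Q j x).real A - (Q j x').real A| ≤ (Real.exp (α j) - 1) * (Q j x').real A := by
    intro j x x' A hA
    have real : ∀ x x' : X j, (Q j x).real A ≤ Real.exp (α j) * (Q j x').real A := fun x x' => by
      have h1 := ENNReal.toReal_mono (ENNReal.mul_ne_top ENNReal.ofReal_ne_top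
        (measure_ne_top _ _)) (hLDP j x x' A hA)
      rwa [ENNReal.toReal_mul, ENNReal.toReal_ofReal (Real.exp_pos _).le] at h1
    have h1 := real x x'
    have h2 := real x' x
    have h3 : 0 ≤ (Q j x').real A := measureReal_nonneg
    have h4 : 0 ≤ (Q j x).real A := measureReal_nonneg
    have h5 := hc j
    rw [abs_le]
    constructor
    · nlinarith
    · linarith
  set C := ∏ j, (Real.exp (α j) - 1) with hC
  have hC0 : 0 ≤ C := Finset.prod_nonneg fun j _ => hc j
  have hT0 : 0 ≤ dTV P Pt := ENNReal.toReal_nonneg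
  have hmain : ∀ A, MeasurableSet A → ∀ x0 : ∀ j, X j,
      |(Pt.bind K).real A - (P.bind K).real A| ≤ C * dTV P Pt * (K x0).real A := by
    intro A hA x0
    let mix : Finset (Fin d) → (∀ j, X j) → ∀ j, X j := fun t x j => if j ∈ t then x0 j else x j
    have hmix : ∀ t, Measurable (mix t) := fun t => by
      refine measurable_pi_lambda _ fun j => ?_
      by_cases hj : j ∈ t
      · simp only [mix, hj, if_true]; exact measurable_const
      · simp only [mix, hj, if_false]; exact measurable_pi_apply j
    have hgm : ∀ t, Measurable fun x => (K (mix t x)).real A := fun t =>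
      (hKA A hA).comp (hmix t)
    have hgI : ∀ (m : Measure (∀ j, X j)) [IsProbabilityMeasure m] t,
        Integrable (fun x => (K (mix t x)).real A) m := fun m _ t =>
      Integrable.of_bound (hgm t).aestronglyMeasurable 1 (ae_of_all _ fun x => by
        rw [Real.norm_of_nonneg measureReal_nonneg]; exact measureReal_le_one)
    have hB : ∀ x, |∑ t : Finset (Fin d), (-1 : ℝ) ^ t.card * (K (mix t x)).real A|
        ≤ C * (K x0).real A := fun x => by
      have h1 := aux_core (fun j => Q j (x j)) (fun j => Q j (x0 j))
        (fun j => Real.exp (α j) - 1) hc (fun j B hB => hQ j _ _ B hB) A hA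
      have h2 : ∀ t : Finset (Fin d), K (mix t x) =
          Measure.pi (fun j => if j ∈ t then Q j (x0 j) else Q j (x j)) := fun t => by
        simp only [hK, mix]
        congr 1
        funext j
        split_ifs <;> rfl
      simp only [h2]
      exact h1
    have h3 := aux_tv P Pt _ (Finset.measurable_sum _ fun t _ => (hgm t).const_mul _) _ hB
    have h4 : ∀ t : Finset (Fin d), t ≠ ∅ →
        ∫ x, (K (mix t x)).real A ∂P = ∫ x, (K (mix t x)).real A ∂Pt := by
      intro t ht
      let S : Set (Fin d) := {j | j ∉ t}
      have hS : S ≠ Set.univ := by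
        obtain ⟨j, hj⟩ := Finset.nonempty_iff_ne_empty.2 ht
        intro h
        exact (h ▸ Set.mem_univ j : j ∈ S) hj
      let ext : (∀ j : S, X j) → ∀ j, X j := fun y j => if h : j ∈ t then x0 j else y ⟨j, h⟩
      have hext : Measurable ext := by
        refine measurable_pi_lambda _ fun j => ?_
        by_cases hj : j ∈ t
        · simp only [ext, hj, dite_true]; exact measurable_const
        · simp only [ext, hj, dite_false]; exact measurable_pi_apply (⟨j, hj⟩ : S)
      have hres : Measurable (fun (x : ∀ j, X j) (j : S) => x j) :=
        measurable_pi_lambda _ fun j => measurable_pi_apply _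
      have hcomp : ∀ x : ∀ j, X j, mix t x = ext (fun j : S => x j) := fun x => by
        funext j
        simp only [mix, ext]
        split_ifs <;> rfl
      have hmm : Measurable fun y => (K (ext y)).real A := (hKA A hA).comp hext
      have h5 : ∀ m : Measure (∀ j, X j), ∫ x, (K (mix t x)).real A ∂m =
          ∫ y, (K (ext y)).real A ∂(m.map (fun x (j : S) => x j)) := fun m => by
        rw [integral_map hres.aemeasurable hmm.aestronglyMeasurable]
        simp only [hcomp]
      rw [h5, h5, hmarg S hS]
    have h6 : ∀ x, mix ∅ x = x := fun x => by
      funext j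
      simp [mix]
    rw [integral_finsetSum _ (fun t _ => (hgI Pt t).const_mul _),
      integral_finsetSum _ (fun t _ => (hgI P t).const_mul _), ← Finset.sum_sub_distrib,
      Finset.sum_eq_single ∅] at h3
    · simp only [Finset.card_empty, pow_zero, one_mul, h6] at h3
      rw [hKint Pt A hA, hKint P A hA]
      exact h3.trans (le_of_eq (by ring))
    · intro t _ ht
      rw [integral_const_mul, integral_const_mul, h4 t ht, sub_self]
    · intro h
      exact absurd (Finset.mem_univ _) h
  rw [← mul_pow]
  refine aux_kl _ _ _ (mul_nonneg hC0 hT0) fun A hA => ?_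
  have hI : Integrable (fun x => (K x).real A) P :=
    Integrable.of_bound (hKA A hA).aestronglyMeasurable 1 (ae_of_all _ fun x => by
        rw [Real.norm_of_nonneg measureReal_nonneg]; exact measureReal_le_one)
  have h7 := integral_mono (integrable_const (μ := P) _) (hI.const_mul (C * dTV P Pt))
    (hmain A hA)
  rw [integral_const_mul, ← hKint P A hA] at h7
  simpa using h7
end

section
/- Under the same componentwise LDP setup with n i.i.d. raw samples: if (X_1,...,X_n) are i.i.d. with law P and (X̃_1,...,X̃_n) i.i.d. with law P̃, all strict-subset marginals of P and P̃ coincide, and Z_i, Z̃_i are obtained through an (possibly sequentially interactive) α-CLDP mechanism, then d_{KL}(Law(Z_1,...,Z_n), Law(Z̃_1,...,Z̃_n)) ≤ n · (∏_{j=1}^d (e^{α_j} − 1))² · d_{TV}(P, P̃)². -/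
open MeasureTheory Real

/-- Law of the public sample `(Z_1, …, Z_n)` produced by a sequentially
interactive componentwise mechanism applied to i.i.d. raw samples of law `P`:
given the public history `hist = (Z_1, …, Z_i)`, a fresh raw sample `x ~ P` is
drawn and each component `x j` is privatized independently through the channel
`K i j (x j) hist`. -/
noncomputable def jointLaw {d : ℕ} {X Z : Fin d → Type*}
    [∀ j, MeasurableSpace (X j)] [∀ j, MeasurableSpace (Z j)]
    (P : Measure (∀ j, X j))
    (K : (i : ℕ) → (j : Fin d) → X j → (Fin i → ∀ j, Z j) → Measure (Z j)) :
    (n : ℕ) → Measure (Fin n → ∀ j, Z j)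
  | 0 => Measure.dirac (fun i => i.elim0)
  | (n + 1) => (jointLaw P K n).bind fun hist =>
      ((P.bind fun x => Measure.pi fun j => K n j (x j) hist).map
        fun znew => Fin.snoc hist znew)

open Set ProbabilityTheory
open scoped ENNReal NNReal

lemma rect_semiring {d : ℕ} (hd : 1 ≤ d) (Z : Fin d → Type*) [∀ j, MeasurableSpace (Z j)] :
    IsSetSemiring (pi univ '' pi univ fun i : Fin d => { s : Set (Z i) | MeasurableSet s }) := by
  classical
  refine ⟨⟨fun _ => ∅, by simp, ?_⟩, ?_, ?_⟩
  · rw [Set.univ_pi_eq_empty_iff]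
    exact ⟨⟨0, hd⟩, rfl⟩
  · rintro _ ⟨s, hs, rfl⟩ _ ⟨t, ht, rfl⟩
    refine ⟨fun i => s i ∩ t i, ?_, ?_⟩
    · intro i _
      exact (hs i trivial).inter (ht i trivial)
    · rw [Set.pi_inter_distrib]
  · rintro _ ⟨s, hs, rfl⟩ _ ⟨t, ht, rfl⟩
    let R : Fin d → Set (∀ i, Z i) := fun j => pi univ fun i =>
      if i < j then s i ∩ t i else if i = j then s i \ t i else s i
    refine ⟨Finset.univ.image R, ?_, ?_, ?_⟩
    · intro u hu
      simp only [Finset.coe_image, Finset.coe_univ, Set.image_univ, Set.mem_range] at hu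
      obtain ⟨j, rfl⟩ := hu
      refine ⟨_, ?_, rfl⟩
      intro i _
      have h1 : MeasurableSet (s i) := hs i trivial
      have h2 : MeasurableSet (t i) := ht i trivial
      show MeasurableSet (if i < j then s i ∩ t i else if i = j then s i \ t i else s i)
      split_ifs
      · exact h1.inter h2
      · exact h1.diff h2
      · exact h1
    · have key : ∀ j k, j < k → Disjoint (R j) (R k) := by
        intro j k hjk
        rw [Set.disjoint_left]
        intro x hx hy
        have h1 := hx j trivial
        have h2 := hy j trivial
        simp only [lt_irrefl, if_false, if_true] at h1
        simp only [hjk, if_true] at h2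
        exact h1.2 h2.2
      intro a ha b hb hab
      simp only [Finset.coe_image, Finset.coe_univ, Set.image_univ, Set.mem_range] at ha hb
      obtain ⟨j, rfl⟩ := ha
      obtain ⟨k, rfl⟩ := hb
      rcases lt_trichotomy j k with h | h | h
      · exact key j k h
      · exact absurd (by rw [h]) hab
      · exact (key k j h).symm
    · ext x
      simp only [Finset.coe_image, Finset.coe_univ, Set.image_univ, Set.mem_sUnion,
        Set.mem_range, exists_exists_eq_and, Set.mem_sdiff]
      constructor
      · rintro ⟨h1, h2⟩
        have hne : {j | x j ∉ t j}.Nonempty := by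
          by_contra hcon
          rw [Set.not_nonempty_iff_eq_empty] at hcon
          apply h2
          intro i _
          by_contra hi
          have : i ∈ {j | x j ∉ t j} := hi
          rw [hcon] at this
          exact this
        obtain ⟨j, hj, hmin⟩ := (wellFounded_lt (α := Fin d)).has_min _ hne
        refine ⟨j, ?_⟩
        intro i _
        show x i ∈ (if i < j then s i ∩ t i else if i = j then s i \ t i else s i)
        split_ifs with hij hij'
        · refine ⟨h1 i trivial, ?_⟩
          by_contra hi
          exact hmin i hi hij
        · subst hij'
          exact ⟨h1 i trivial, hj⟩
        · exact h1 i trivial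
      · rintro ⟨j, hj⟩
        constructor
        · intro i _
          have := hj i trivial
          simp only at this
          split_ifs at this
          · exact this.1
          · exact this.1
          · exact this
        · intro hcon
          have := hj j trivial
          simp only [lt_irrefl, if_false, if_true] at this
          exact this.2 (hcon j trivial)

lemma measure_le_of_rect {d : ℕ} (hd : 1 ≤ d) (Z : Fin d → Type*) [∀ j, MeasurableSpace (Z j)]
    (μ ν : Measure (∀ j, Z j)) [IsFiniteMeasure ν]
    (h : ∀ s : (∀ j, Set (Z j)), (∀ j, MeasurableSet (s j)) → μ (pi univ s) ≤ ν (pi univ s)) :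
    μ ≤ ν := by
  have hC := rect_semiring hd Z
  set C := (pi univ '' pi univ fun i : Fin d => { s : Set (Z i) | MeasurableSet s }) with hCdef
  have hmeas : ∀ s ∈ C, MeasurableSet s := by
    rintro _ ⟨s, hs, rfl⟩
    exact MeasurableSet.univ_pi fun i => hs i trivial
  have hgen : (MeasurableSpace.pi : MeasurableSpace (∀ j, Z j)) = MeasurableSpace.generateFrom C :=
    generateFrom_pi.symm
  let m : AddContent ℝ≥0∞ C :=
    { toFun := fun s => ν s
      empty' := by simp
      sUnion' := by
        intro I hI hd _
        rw [Set.sUnion_eq_biUnion]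
        exact measure_biUnion_finset hd (fun s hs => hmeas s (hI hs)) }
  have hsub : m.IsSigmaSubadditive := by
    intro f hf hf'
    exact measure_iUnion_le (μ := ν) f
  have hν : m.measure hC hgen.le hsub = ν := by
    symm
    refine ext_of_generate_finite C hgen hC.isPiSystem ?_ ?_
    · intro s hs
      exact (m.measure_eq hC hgen hsub hs).symm
    · have hu : (univ : Set (∀ j, Z j)) ∈ C := ⟨fun _ => univ, by simp, by simp⟩
      exact (m.measure_eq hC hgen hsub hu).symm
  rw [Measure.le_iff]
  intro A hA
  have e : m.measure hC hgen.le hsub A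
      = inducedOuterMeasure (fun x _ ↦ m x) hC.empty_mem addContent_empty A :=
    trim_measurableSet_eq _ hA
  rw [← hν, e]
  have : μ.toOuterMeasure ≤ inducedOuterMeasure (fun x _ ↦ m x) hC.empty_mem addContent_empty := by
    rw [le_inducedOuterMeasure]
    rintro _ ⟨s, hs, rfl⟩
    exact h s fun j => hs j trivial
  exact this A

lemma integral_diff_le {W : Type*} [MeasurableSpace W] (P Pt : Measure W)
    [IsProbabilityMeasure P] [IsProbabilityMeasure Pt] (g : W → ℝ) (hg : Measurable g) (B : ℝ)
    (h0 : ∀ x, 0 ≤ g x) (hB : ∀ x, g x ≤ B) :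
    |∫ x, g x ∂Pt - ∫ x, g x ∂P| ≤ B * dTV P Pt := by
  set s := P.toSignedMeasure - Pt.toSignedMeasure with hs
  have hj := s.toSignedMeasure_toJordanDecomposition
  set j := s.toJordanDecomposition with hjdef
  have hint : ∀ μ : Measure W, IsFiniteMeasure μ → Integrable g μ := by
    intro μ _
    refine Integrable.of_bound hg.aestronglyMeasurable B (ae_of_all _ fun x => ?_)
    rw [Real.norm_eq_abs, abs_of_nonneg (h0 x)]
    exact hB x
  have hb : ∀ μ : Measure W, IsFiniteMeasure μ → ∫ x, g x ∂μ ≤ B * μ.real univ := by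
    intro μ _
    calc ∫ x, g x ∂μ ≤ ∫ x, B ∂μ := integral_mono (hint μ ‹_›) (integrable_const _) hB
      _ = B * μ.real univ := by rw [integral_const, smul_eq_mul, mul_comm]
  have hp : ∀ μ : Measure W, 0 ≤ ∫ x, g x ∂μ := fun μ => integral_nonneg h0
  have heq : P + j.negPart = Pt + j.posPart := by
    ext A hA
    have h1 : j.toSignedMeasure A = s A := by rw [hj]
    rw [hs, JordanDecomposition.toSignedMeasure, Measure.toSignedMeasure_sub_apply hA,
      Measure.toSignedMeasure_sub_apply hA] at h1
    rw [Measure.add_apply, Measure.add_apply, ← ENNReal.toReal_eq_toReal_iff' (by finiteness)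
      (by finiteness), ENNReal.toReal_add (by finiteness) (by finiteness),
      ENNReal.toReal_add (by finiteness) (by finiteness)]
    simp only [Measure.real] at h1
    linarith
  have h2 : ∫ x, g x ∂P + ∫ x, g x ∂j.negPart = ∫ x, g x ∂Pt + ∫ x, g x ∂j.posPart := by
    rw [← integral_add_measure (hint _ inferInstance) (hint _ inferInstance), heq,
      integral_add_measure (hint _ inferInstance) (hint _ inferInstance)]
  have htv : dTV P Pt = j.posPart.real univ + j.negPart.real univ := by
    rw [dTV, ← hs, SignedMeasure.totalVariation, ← hjdef, Measure.add_apply,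
      ENNReal.toReal_add (by finiteness) (by finiteness)]
    rfl
  have hB0 : 0 ≤ B := by
    obtain ⟨x⟩ := (inferInstance : (ae P).NeBot).nonempty
    exact (h0 x).trans (hB x)
  have := hb j.posPart inferInstance
  have := hb j.negPart inferInstance
  have := hp j.posPart
  have := hp j.negPart
  have e1 := mul_nonneg hB0 (measureReal_nonneg (μ := j.posPart) (s := univ))
  have e2 := mul_nonneg hB0 (measureReal_nonneg (μ := j.negPart) (s := univ))
  rw [htv, mul_add, abs_le]
  constructor <;> linarith

def L2Dom {W : Type*} [MeasurableSpace W] (Mt M : Measure W) (c : ℝ≥0∞) : Prop :=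
  ∀ f : W → ℝ≥0∞, Measurable f → (∫⁻ x, f x ∂Mt) ^ 2 ≤ c * ∫⁻ x, f x ^ 2 ∂M

lemma lintegral_cs {W : Type*} [MeasurableSpace W] (μ : Measure W) (f g : W → ℝ≥0∞)
    (hf : Measurable f) (hg : Measurable g) :
    (∫⁻ x, f x * g x ∂μ) ^ 2 ≤ (∫⁻ x, f x ^ 2 ∂μ) * ∫⁻ x, g x ^ 2 ∂μ := by
  have h := ENNReal.lintegral_mul_le_Lp_mul_Lq μ Real.HolderConjugate.two_two
    hf.aemeasurable hg.aemeasurable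
  simp only [Pi.mul_apply, ENNReal.rpow_two] at h
  calc _ ≤ _ := pow_le_pow_left₀ zero_le h 2
    _ = _ := by
      rw [mul_pow, ← ENNReal.rpow_natCast, ← ENNReal.rpow_natCast, ← ENNReal.rpow_mul,
        ← ENNReal.rpow_mul]
      norm_num

lemma L2Dom.single {W : Type*} [MeasurableSpace W] (Mt M : Measure W)
    [IsProbabilityMeasure Mt] [IsProbabilityMeasure M] (ε : ℝ≥0)
    (h1 : Mt ≤ M + ε • M) (h2 : M ≤ Mt + ε • M) : L2Dom Mt M (1 + ε ^ 2) := by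
  have hac : Mt ≪ M := by
    intro A hA
    have := h1 A
    simpa [hA] using this
  set r := Mt.rnDeriv M with hr
  have hrm : Measurable r := Measure.measurable_rnDeriv _ _
  have hset : ∀ A, ∫⁻ x in A, r x ∂M = Mt A := fun A => Measure.setLIntegral_rnDeriv hac A
  have a1 : r ≤ᵐ[M] fun _ => 1 + (ε : ℝ≥0∞) := by
    refine ae_le_of_forall_setLIntegral_le_of_sigmaFinite hrm fun A hA _ => ?_
    rw [hset]
    have := h1 A
    simpa [add_mul] using this
  have a2 : (fun _ => (1 : ℝ≥0∞)) ≤ᵐ[M] fun x => r x + ε := by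
    refine ae_le_of_forall_setLIntegral_le_of_sigmaFinite measurable_const fun A hA _ => ?_
    rw [lintegral_add_left hrm, hset]
    have := h2 A
    simpa using this
  have hsq : ∫⁻ x, r x ^ 2 ∂M ≤ 1 + (ε : ℝ≥0∞) ^ 2 := by
    have hpt : ∀ᵐ x ∂M, r x ^ 2 + 1 ≤ (ε : ℝ≥0∞) ^ 2 + 2 * r x := by
      filter_upwards [a1, a2] with x hx1 hx2
      have hfin : r x ≠ ∞ := ne_top_of_le_ne_top (by finiteness) hx1
      lift r x to ℝ≥0 using hfin with y
      norm_cast at hx1 hx2 ⊢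
      rw [← NNReal.coe_le_coe] at hx1 hx2 ⊢
      push_cast at hx1 hx2 ⊢
      nlinarith
    have h3 := lintegral_mono_ae hpt
    rw [lintegral_add_left (hrm.pow_const 2), lintegral_add_left measurable_const,
      lintegral_const_mul _ hrm, Measure.lintegral_rnDeriv hac] at h3
    simp only [lintegral_const, measure_univ, mul_one] at h3
    have h4 : (ε : ℝ≥0∞) ^ 2 + 2 = (1 + (ε : ℝ≥0∞) ^ 2) + 1 := by
      rw [← one_add_one_eq_two]; ring
    rw [h4] at h3
    exact (ENNReal.add_le_add_iff_right (by simp)).1 h3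
  intro f hf
  rw [← lintegral_rnDeriv_mul hac hf.aemeasurable]
  refine (lintegral_cs M _ f hrm hf).trans ?_
  gcongr

lemma L2Dom.bind {V W : Type*} [MeasurableSpace V] [MeasurableSpace W] {Mt M : Measure V}
    {c c' : ℝ≥0∞} (h : L2Dom Mt M c) (κt κ : V → Measure W) (hκt : Measurable κt)
    (hκ : Measurable κ) (h' : ∀ v, L2Dom (κt v) (κ v) c') :
    L2Dom (Mt.bind κt) (M.bind κ) (c * c') := by
  intro f hf
  rw [Measure.lintegral_bind hκt.aemeasurable hf.aemeasurable,
    Measure.lintegral_bind hκ.aemeasurable (hf.pow_const 2).aemeasurable]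
  refine (h _ ((Measure.measurable_lintegral hf).comp hκt)).trans ?_
  rw [mul_assoc]
  gcongr
  refine le_trans ?_
    (lintegral_const_mul c' ((Measure.measurable_lintegral (hf.pow_const 2)).comp hκ)).le
  exact lintegral_mono fun v => h' v f hf

lemma L2Dom.map {V W : Type*} [MeasurableSpace V] [MeasurableSpace W] {Mt M : Measure V}
    {c : ℝ≥0∞} (h : L2Dom Mt M c) {g : V → W} (hg : Measurable g) :
    L2Dom (Mt.map g) (M.map g) c := by
  intro f hf
  rw [lintegral_map hf hg, lintegral_map (hf.pow_const 2) hg]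
  exact h _ (hf.comp hg)

lemma L2Dom.dKL_le {W : Type*} [MeasurableSpace W] {Mt M : Measure W}
    [IsProbabilityMeasure Mt] [IsProbabilityMeasure M] {c : ℝ≥0} (hc : 1 ≤ c)
    (h : L2Dom Mt M c) : dKL M Mt ≤ Real.log c := by
  have hac : Mt ≪ M := by
    refine Measure.AbsolutelyContinuous.mk fun A hA hA0 => ?_
    have := h (A.indicator 1) (measurable_one.indicator hA)
    have e : ∀ x, (A.indicator (1 : W → ℝ≥0∞) x) ^ 2 = A.indicator 1 x := by
      intro x
      by_cases hx : x ∈ A <;> simp [hx]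
    simp only [e] at this
    rw [lintegral_indicator_one hA, lintegral_indicator_one hA, hA0] at this
    simpa using this
  set r := Mt.rnDeriv M with hr
  have hrm : Measurable r := Measure.measurable_rnDeriv _ _
  have htr : ∀ N : ℕ, ∫⁻ x, min (r x) N ∂Mt ≤ c := by
    intro N
    have hm : Measurable fun x => min (r x) (N : ℝ≥0∞) := hrm.min measurable_const
    have h1 := h _ hm
    have h2 : ∫⁻ x, min (r x) N ^ 2 ∂M ≤ ∫⁻ x, min (r x) N ∂Mt := by
      rw [← lintegral_rnDeriv_mul hac hm.aemeasurable]
      refine lintegral_mono fun x => ?_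
      rw [sq]
      exact mul_le_mul_left (min_le_left _ _) _
    have h3 : ∫⁻ x, min (r x) N ∂Mt ≠ ∞ := by
      refine ne_top_of_le_ne_top (b := (N : ℝ≥0∞)) (by finiteness) ?_
      calc _ ≤ ∫⁻ x, (N : ℝ≥0∞) ∂Mt := lintegral_mono fun x => min_le_right _ _
        _ = N := by simp
    set J := ∫⁻ x, min (r x) N ∂Mt
    have h4 : J * J ≤ c * J := by
      rw [← sq]
      exact h1.trans (mul_le_mul_right h2 _)
    by_cases hJ : J = 0
    · rw [hJ]; exact zero_le
    · exact (ENNReal.mul_le_mul_iff_left hJ h3).1 h4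
  have hlin : ∫⁻ x, r x ∂Mt ≤ c := by
    have e : ∀ x, r x = ⨆ N : ℕ, min (r x) N := by
      intro x
      have : ⨆ N : ℕ, min (r x) (N : ℝ≥0∞) = min (r x) (⨆ N : ℕ, (N : ℝ≥0∞)) :=
        (inf_iSup_eq _ _).symm
      rw [this, ENNReal.iSup_natCast, min_top_right]
    rw [lintegral_congr e, lintegral_iSup]
    · exact iSup_le htr
    · intro N
      exact hrm.min measurable_const
    · intro a b hab x
      have : (a : ℝ≥0∞) ≤ b := by exact_mod_cast hab
      exact min_le_min_left _ this
  have hc0 : (0 : ℝ) < c := by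
    have : (1 : ℝ) ≤ c := by exact_mod_cast hc
    linarith
  have hlog : 0 ≤ Real.log c := Real.log_nonneg (by exact_mod_cast hc)
  have hfin : ∫⁻ x, r x ∂Mt ≠ ∞ := ne_top_of_le_ne_top (by finiteness) hlin
  have hri : Integrable (fun x => (r x).toReal) Mt :=
    integrable_toReal_of_lintegral_ne_top hrm.aemeasurable hfin
  have hrI : ∫ x, (r x).toReal ∂Mt ≤ c := by
    rw [integral_toReal hrm.aemeasurable (ae_lt_top hrm hfin)]
    exact ENNReal.toReal_le_coe_of_le_coe hlin
  rw [dKL, ← hr]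
  by_cases hli : Integrable (fun x => Real.log (r x).toReal) Mt
  swap
  · rw [integral_undef hli]; exact hlog
  calc ∫ x, Real.log (r x).toReal ∂Mt
      ≤ ∫ x, ((Real.log c - 1) + (r x).toReal / c) ∂Mt := by
        refine integral_mono_ae hli ((integrable_const _).add (hri.div_const _)) ?_
        filter_upwards [Measure.rnDeriv_pos hac, ae_lt_top hrm hfin] with x hx1 hx2
        have hx : 0 < (r x).toReal := ENNReal.toReal_pos hx1.ne' hx2.ne
        have := Real.log_le_sub_one_of_pos (div_pos hx hc0)
        rw [Real.log_div hx.ne' hc0.ne'] at this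
        show Real.log (r x).toReal ≤ (Real.log c - 1) + (r x).toReal / c
        linarith
    _ = (Real.log c - 1) + (∫ x, (r x).toReal ∂Mt) / c := by
        rw [integral_add (integrable_const _) (hri.div_const _), integral_div]
        simp
    _ ≤ Real.log c := by
        have : (∫ x, (r x).toReal ∂Mt) / c ≤ 1 := (div_le_one hc0).2 hrI
        linarith

lemma dTV_nonneg {W : Type*} [MeasurableSpace W] (P Pt : Measure W)
    [IsFiniteMeasure P] [IsFiniteMeasure Pt] : 0 ≤ dTV P Pt := ENNReal.toReal_nonneg

lemma prod_integral_diff {d : ℕ} (X : Fin d → Type*) [∀ j, MeasurableSpace (X j)]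
    (α : Fin d → ℝ) (hα : ∀ j, 0 ≤ α j)
    (P Pt : Measure (∀ j, X j)) [IsProbabilityMeasure P] [IsProbabilityMeasure Pt]
    (hmarg : ∀ S : Set (Fin d), S ≠ Set.univ →
      P.map (fun x (j : S) => x j) = Pt.map (fun x (j : S) => x j))
    (a : ∀ j, X j → ℝ) (ha : ∀ j, Measurable (a j)) (h0 : ∀ j x, 0 ≤ a j x)
    (h1 : ∀ j x, a j x ≤ 1) (hL : ∀ j x x', a j x ≤ Real.exp (α j) * a j x') :
    |∫ x, ∏ j, a j (x j) ∂Pt - ∫ x, ∏ j, a j (x j) ∂P|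
      ≤ ((∏ j, (Real.exp (α j) - 1)) * dTV P Pt) * ∫ x, ∏ j, a j (x j) ∂P := by
  classical
  obtain ⟨x₀⟩ := (inferInstance : (ae P).NeBot).nonempty
  have hne : ∀ j, Nonempty (X j) := fun j => ⟨x₀ j⟩
  let c : Fin d → ℝ := fun j => ⨅ x, a j x
  have hbdd : ∀ j, BddBelow (Set.range (a j)) := fun j => ⟨0, by rintro _ ⟨x, rfl⟩; exact h0 j x⟩
  have hc0 : ∀ j, 0 ≤ c j := fun j => Real.iInf_nonneg (h0 j)
  have hca : ∀ j x, c j ≤ a j x := fun j x => ciInf_le (hbdd j) x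
  have hac : ∀ j x, a j x ≤ Real.exp (α j) * c j := by
    intro j x
    have : a j x / Real.exp (α j) ≤ c j := by
      refine le_ciInf fun x' => ?_
      rw [div_le_iff₀' (Real.exp_pos _)]
      exact hL j x x'
    rwa [div_le_iff₀' (Real.exp_pos _)] at this
  have he : ∀ j, 0 ≤ Real.exp (α j) - 1 := fun j => by
    have := Real.one_le_exp (hα j); linarith
  have hmp : ∀ t : Finset (Fin d), Measurable fun x : ∀ j, X j => ∏ j ∈ t, a j (x j) := by
    intro t
    exact Finset.measurable_fun_prod _ fun j _ => (ha j).comp (measurable_pi_apply j)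
  have hint : ∀ (t : Finset (Fin d)) (μ : Measure (∀ j, X j)), IsProbabilityMeasure μ →
      Integrable (fun x => ∏ j ∈ t, a j (x j)) μ := by
    intro t μ _
    refine Integrable.of_bound (hmp t).aestronglyMeasurable 1 (ae_of_all _ fun x => ?_)
    rw [Real.norm_eq_abs, abs_of_nonneg (Finset.prod_nonneg fun j _ => h0 _ _)]
    exact Finset.prod_le_one (fun j _ => h0 _ _) fun j _ => h1 _ _
  have hJ : ∀ t : Finset (Fin d), t ≠ Finset.univ →
      ∫ x, ∏ j ∈ t, a j (x j) ∂Pt = ∫ x, ∏ j ∈ t, a j (x j) ∂P := by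
    intro t ht
    have hm := hmarg (t : Set (Fin d)) (by simpa using ht)
    have hr : Measurable fun (x : ∀ j, X j) (j : (t : Set (Fin d))) => x j :=
      measurable_pi_lambda _ fun j => measurable_pi_apply _
    have hg : Measurable fun y : (∀ j : (t : Set (Fin d)), X j) =>
        ∏ j : (t : Set (Fin d)), a j (y j) :=
      Finset.measurable_fun_prod _ fun j _ => (ha j).comp (measurable_pi_apply j)
    have e : ∀ μ : Measure (∀ j, X j), ∫ x, ∏ j ∈ t, a j (x j) ∂μ
        = ∫ y, ∏ j : (t : Set (Fin d)), a j (y j) ∂(μ.map (fun x (j : (t : Set (Fin d))) => x j)) := by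
      intro μ
      rw [integral_map hr.aemeasurable hg.aestronglyMeasurable]
      refine integral_congr_ae (ae_of_all _ fun x => ?_)
      exact (Finset.prod_coe_sort t (fun j => a j (x j))).symm
    rw [e, e, hm]
  let w : Finset (Fin d) → ℝ := fun t => ∏ j ∈ Finset.univ \ t, (-c j)
  have hI : ∀ μ : Measure (∀ j, X j), IsProbabilityMeasure μ →
      ∫ x, ∏ j, (a j (x j) - c j) ∂μ
        = ∑ t ∈ (Finset.univ : Finset (Fin d)).powerset, (∫ x, ∏ j ∈ t, a j (x j) ∂μ) * w t := by
    intro μ hμ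
    have : ∀ x : ∀ j, X j, ∏ j, (a j (x j) - c j)
        = ∑ t ∈ (Finset.univ : Finset (Fin d)).powerset, (∏ j ∈ t, a j (x j)) * w t := by
      intro x
      simp only [sub_eq_add_neg]
      exact Finset.prod_add _ _ _
    simp only [this]
    rw [integral_finsetSum _ fun t _ => (hint t μ hμ).mul_const _]
    exact Finset.sum_congr rfl fun t _ => integral_mul_const _ _
  have hdiff : ∫ x, ∏ j, a j (x j) ∂Pt - ∫ x, ∏ j, a j (x j) ∂P
      = ∫ x, ∏ j, (a j (x j) - c j) ∂Pt - ∫ x, ∏ j, (a j (x j) - c j) ∂P := by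
    rw [hI Pt inferInstance, hI P inferInstance, ← Finset.sum_sub_distrib,
      Finset.sum_eq_single Finset.univ]
    · simp [w]
    · intro t _ ht
      rw [hJ t ht, sub_self]
    · intro h
      simp at h
  have hB := integral_diff_le P Pt (fun x => ∏ j, (a j (x j) - c j))
    (Finset.measurable_fun_prod _ fun j _ =>
      ((ha j).comp (measurable_pi_apply j)).sub_const _)
    (∏ j, ((Real.exp (α j) - 1) * c j))
    (fun x => Finset.prod_nonneg fun j _ => sub_nonneg.2 (hca _ _))
    (fun x => Finset.prod_le_prod (fun j _ => sub_nonneg.2 (hca _ _)) fun j _ => by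
      have := hac j (x j); linarith)
  rw [hdiff]
  refine hB.trans ?_
  rw [Finset.prod_mul_distrib, mul_right_comm]
  refine mul_le_mul_of_nonneg_left ?_
    (mul_nonneg (Finset.prod_nonneg fun j _ => he j) (dTV_nonneg _ _))
  calc ∏ j, c j = ∫ x, ∏ j, c j ∂P := by simp
    _ ≤ ∫ x, ∏ j, a j (x j) ∂P := integral_mono (integrable_const _) (hint _ _ inferInstance)
        fun x => Finset.prod_le_prod (fun j _ => hc0 j) fun j _ => hca _ _

lemma measurable_pi_kernel {d : ℕ} {Z : Fin d → Type*} [∀ j, MeasurableSpace (Z j)]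
    {T : Type*} [MeasurableSpace T] (k : ∀ j, T → Measure (Z j))
    [∀ j x, IsProbabilityMeasure (k j x)]
    (hk : ∀ j (A : Set (Z j)), MeasurableSet A → Measurable fun x => k j x A) :
    Measurable fun x => Measure.pi fun j => k j x := by
  refine Measurable.measure_of_isPiSystem_of_isProbabilityMeasure
    (generateFrom_pi (α := Z)).symm isPiSystem_pi ?_
  rintro _ ⟨s, hs, rfl⟩
  simp only [Measure.pi_pi]
  exact Finset.measurable_fun_prod _ fun j _ => hk j (s j) (hs j trivial)

lemma one_step {d : ℕ} (hd : 1 ≤ d) (X Z : Fin d → Type*)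
    [∀ j, MeasurableSpace (X j)] [∀ j, MeasurableSpace (Z j)]
    (α : Fin d → ℝ) (hα : ∀ j, 0 ≤ α j)
    (k : ∀ j, X j → Measure (Z j)) [∀ j x, IsProbabilityMeasure (k j x)]
    (hk : ∀ j (A : Set (Z j)), MeasurableSet A → Measurable fun x => k j x A)
    (hLDP : ∀ j (x x' : X j) (A : Set (Z j)), MeasurableSet A →
      k j x A ≤ ENNReal.ofReal (Real.exp (α j)) * k j x' A)
    (P Pt : Measure (∀ j, X j)) [IsProbabilityMeasure P] [IsProbabilityMeasure Pt]
    (hmarg : ∀ S : Set (Fin d), S ≠ Set.univ →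
      P.map (fun x (j : S) => x j) = Pt.map (fun x (j : S) => x j)) :
    L2Dom (Pt.bind fun x => Measure.pi fun j => k j (x j))
      (P.bind fun x => Measure.pi fun j => k j (x j))
      (1 + ((((∏ j, (Real.exp (α j) - 1)) * dTV P Pt).toNNReal : ℝ≥0) : ℝ≥0∞) ^ 2) := by
  have hm : Measurable fun x : ∀ j, X j => Measure.pi fun j => k j (x j) :=
    measurable_pi_kernel (fun j (x : ∀ j, X j) => k j (x j))
      fun j A hA => (hk j A hA).comp (measurable_pi_apply j)
  have he : 0 ≤ (∏ j, (Real.exp (α j) - 1)) * dTV P Pt := by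
    refine mul_nonneg (Finset.prod_nonneg fun j _ => ?_) (dTV_nonneg _ _)
    have := Real.one_le_exp (hα j); linarith
  set ε := (∏ j, (Real.exp (α j) - 1)) * dTV P Pt with hε
  have hprob : ∀ μ : Measure (∀ j, X j), IsProbabilityMeasure μ →
      IsProbabilityMeasure (μ.bind fun x => Measure.pi fun j => k j (x j)) := by
    intro μ _
    exact isProbabilityMeasure_bind hm.aemeasurable (ae_of_all _ fun x => inferInstance)
  have := hprob P inferInstance
  have := hprob Pt inferInstance
  have hrect : ∀ (μ : Measure (∀ j, X j)), IsProbabilityMeasure μ →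
      ∀ s : (∀ j, Set (Z j)), (∀ j, MeasurableSet (s j)) →
      (μ.bind fun x => Measure.pi fun j => k j (x j)) (pi univ s)
        = ENNReal.ofReal (∫ x, ∏ j, (k j (x j)).real (s j) ∂μ) := by
    intro μ _ s hs
    rw [Measure.bind_apply (MeasurableSet.univ_pi hs) hm.aemeasurable,
      ofReal_integral_eq_lintegral_ofReal]
    · refine lintegral_congr fun x => ?_
      rw [Measure.pi_pi, ENNReal.ofReal_prod_of_nonneg fun j _ => measureReal_nonneg]
      simp
    · refine Integrable.of_bound (Measurable.aestronglyMeasurable ?_) 1 (ae_of_all _ fun x => ?_)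
      · exact Finset.measurable_fun_prod _ fun j _ =>
          ((hk j _ (hs j)).ennreal_toReal).comp (measurable_pi_apply j)
      · rw [Real.norm_eq_abs, abs_of_nonneg (Finset.prod_nonneg fun j _ => measureReal_nonneg)]
        exact Finset.prod_le_one (fun j _ => measureReal_nonneg) fun j _ => measureReal_le_one
    · exact ae_of_all _ fun x => Finset.prod_nonneg fun j _ => measureReal_nonneg
  have hdiff : ∀ s : (∀ j, Set (Z j)), (∀ j, MeasurableSet (s j)) →
      |∫ x, ∏ j, (k j (x j)).real (s j) ∂Pt - ∫ x, ∏ j, (k j (x j)).real (s j) ∂P|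
        ≤ ε * ∫ x, ∏ j, (k j (x j)).real (s j) ∂P := by
    intro s hs
    refine prod_integral_diff X α hα P Pt hmarg (fun j x => (k j x).real (s j))
      (fun j => (hk j _ (hs j)).ennreal_toReal) (fun j x => measureReal_nonneg)
      (fun j x => measureReal_le_one) fun j x x' => ?_
    have := ENNReal.toReal_mono (by finiteness) (hLDP j x x' (s j) (hs j))
    rwa [ENNReal.toReal_mul, ENNReal.toReal_ofReal (Real.exp_pos _).le] at this
  have hnn : ∀ (μ : Measure (∀ j, X j)) (s : ∀ j, Set (Z j)),
      0 ≤ ∫ x, ∏ j, (k j (x j)).real (s j) ∂μ := fun μ s =>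
    integral_nonneg fun x => Finset.prod_nonneg fun j _ => measureReal_nonneg
  apply L2Dom.single
  · refine measure_le_of_rect hd Z _ _ fun s hs => ?_
    rw [Measure.add_apply, Measure.smul_apply, hrect _ inferInstance s hs,
      hrect _ inferInstance s hs, ENNReal.smul_def, smul_eq_mul]
    change _ ≤ _ + ENNReal.ofReal ε * _
    rw [← ENNReal.ofReal_mul he, ← ENNReal.ofReal_add (hnn _ _) (mul_nonneg he (hnn _ _))]
    refine ENNReal.ofReal_le_ofReal ?_
    have := (abs_le.1 (hdiff s hs)).2
    linarith
  · refine measure_le_of_rect hd Z _ _ fun s hs => ?_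
    rw [Measure.add_apply, Measure.smul_apply, hrect _ inferInstance s hs,
      hrect _ inferInstance s hs, ENNReal.smul_def, smul_eq_mul]
    change _ ≤ _ + ENNReal.ofReal ε * _
    rw [← ENNReal.ofReal_mul he, ← ENNReal.ofReal_add (hnn _ _) (mul_nonneg he (hnn _ _))]
    refine ENNReal.ofReal_le_ofReal ?_
    have := (abs_le.1 (hdiff s hs)).1
    linarith

lemma measurable_snoc {n : ℕ} {Y : Type*} [MeasurableSpace Y] :
    Measurable fun p : (Fin n → Y) × Y => (Fin.snoc p.1 p.2 : Fin (n + 1) → Y) := by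
  refine measurable_pi_lambda _ fun i => ?_
  refine Fin.lastCases ?_ (fun i => ?_) i
  · simpa using measurable_snd
  · simpa [Function.comp_def] using (measurable_pi_apply i).comp (measurable_fst (α := Fin n → Y) (β := Y))

lemma measurable_step {d : ℕ} {X Z : Fin d → Type*}
    [∀ j, MeasurableSpace (X j)] [∀ j, MeasurableSpace (Z j)]
    (P : Measure (∀ j, X j)) [IsProbabilityMeasure P] (n : ℕ)
    (K : (j : Fin d) → X j → (Fin n → ∀ j, Z j) → Measure (Z j))
    [∀ j x h, IsProbabilityMeasure (K j x h)]
    (hker : ∀ j (A : Set (Z j)), MeasurableSet A →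
      Measurable fun p : X j × (Fin n → ∀ j, Z j) => K j p.1 p.2 A) :
    Measurable fun hist => ((P.bind fun x => Measure.pi fun j => K j (x j) hist).map
        fun znew => (Fin.snoc hist znew : Fin (n + 1) → ∀ j, Z j)) := by
  have hpi : Measurable fun p : (∀ j, X j) × (Fin n → ∀ j, Z j) =>
      Measure.pi fun j => K j (p.1 j) p.2 :=
    measurable_pi_kernel (fun j (p : (∀ j, X j) × (Fin n → ∀ j, Z j)) => K j (p.1 j) p.2)
      fun j A hA => (hker j A hA).comp
        (((measurable_pi_apply j).comp measurable_fst).prodMk measurable_snd)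
  have hx : ∀ hist, Measurable fun x : ∀ j, X j => Measure.pi fun j => K j (x j) hist :=
    fun hist => hpi.comp (measurable_id.prodMk measurable_const)
  have hb : Measurable fun hist => P.bind fun x => Measure.pi fun j => K j (x j) hist := by
    refine Measure.measurable_of_measurable_coe _ fun A hA => ?_
    simp only [Measure.bind_apply hA (hx _).aemeasurable]
    exact ((Measure.measurable_coe hA).comp hpi).lintegral_prod_left'
  let κ : Kernel (Fin n → ∀ j, Z j) (∀ j, Z j) :=
    ⟨fun hist => P.bind fun x => Measure.pi fun j => K j (x j) hist, hb⟩
  have : IsMarkovKernel κ := ⟨fun hist =>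
    isProbabilityMeasure_bind (hx hist).aemeasurable (ae_of_all _ fun x => inferInstance)⟩
  refine Measure.measurable_of_measurable_coe _ fun A hA => ?_
  have hs : ∀ hist : Fin n → ∀ j, Z j,
      Measurable fun znew => (Fin.snoc hist znew : Fin (n + 1) → ∀ j, Z j) :=
    fun hist => measurable_snoc.comp (measurable_const.prodMk measurable_id)
  simp only [Measure.map_apply (hs _) hA]
  have hA' : MeasurableSet {p : (Fin n → ∀ j, Z j) × (∀ j, Z j) |
      (Fin.snoc p.1 p.2 : Fin (n + 1) → ∀ j, Z j) ∈ A} := measurable_snoc hA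
  have hfin := Kernel.measurable_kernel_prodMk_left (κ := κ) hA'
  exact hfin

lemma measurable_inner {d : ℕ} {X Z : Fin d → Type*}
    [∀ j, MeasurableSpace (X j)] [∀ j, MeasurableSpace (Z j)] (n : ℕ)
    (K : (j : Fin d) → X j → (Fin n → ∀ j, Z j) → Measure (Z j))
    [∀ j x h, IsProbabilityMeasure (K j x h)]
    (hker : ∀ j (A : Set (Z j)), MeasurableSet A →
      Measurable fun p : X j × (Fin n → ∀ j, Z j) => K j p.1 p.2 A) (hist : Fin n → ∀ j, Z j) :
    Measurable fun x : ∀ j, X j => Measure.pi fun j => K j (x j) hist :=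
  measurable_pi_kernel (fun j (x : ∀ j, X j) => K j (x j) hist)
      fun j A hA => (hker j A hA).comp
        ((measurable_pi_apply j).prodMk measurable_const)

lemma prob_jointLaw {d : ℕ} {X Z : Fin d → Type*}
    [∀ j, MeasurableSpace (X j)] [∀ j, MeasurableSpace (Z j)]
    (P : Measure (∀ j, X j)) [IsProbabilityMeasure P]
    (K : (i : ℕ) → (j : Fin d) → X j → (Fin i → ∀ j, Z j) → Measure (Z j))
    [∀ i j x h, IsProbabilityMeasure (K i j x h)]
    (hker : ∀ i j (A : Set (Z j)), MeasurableSet A →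
      Measurable fun p : X j × (Fin i → ∀ j, Z j) => K i j p.1 p.2 A) (n : ℕ) :
    IsProbabilityMeasure (jointLaw P K n) := by
  induction n with
  | zero => rw [jointLaw]; infer_instance
  | succ n ih =>
    rw [jointLaw]
    refine isProbabilityMeasure_bind (measurable_step P n (K n) (hker n)).aemeasurable
      (ae_of_all _ fun hist => ?_)
    have := isProbabilityMeasure_bind (m := P)
      (measurable_inner n (K n) (hker n) hist).aemeasurable (ae_of_all _ fun x => inferInstance)
    exact Measure.isProbabilityMeasure_map
      (measurable_snoc.comp (measurable_const.prodMk measurable_id)).aemeasurable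

/-- tensorized KL bound: for `n` i.i.d. raw samples of laws `P`
and `Pt` whose strict-subset marginals coincide, privatized through a (possibly
sequentially interactive) `α`-CLDP mechanism,
`d_KL(Law(Z_1,…,Z_n), Law(Z̃_1,…,Z̃_n)) ≤ n (∏_j (e^{α_j}−1))² d_TV(P,Pt)²`. -/
theorem stmt_7 {d : ℕ} (hd : 1 ≤ d) (X Z : Fin d → Type*)
    [∀ j, MeasurableSpace (X j)] [∀ j, MeasurableSpace (Z j)]
    (α : Fin d → ℝ) (hα : ∀ j, 0 ≤ α j)
    (K : (i : ℕ) → (j : Fin d) → X j → (Fin i → ∀ j, Z j) → Measure (Z j))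
    [hMarkov : ∀ i j x h, IsProbabilityMeasure (K i j x h)]
    (hker : ∀ i j (A : Set (Z j)), MeasurableSet A →
      Measurable fun p : X j × (Fin i → ∀ j, Z j) => K i j p.1 p.2 A)
    (hLDP : ∀ i j (x x' : X j) (h : Fin i → ∀ j, Z j) (A : Set (Z j)),
      MeasurableSet A →
      K i j x h A ≤ ENNReal.ofReal (Real.exp (α j)) * K i j x' h A)
    (P Pt : Measure (∀ j, X j)) [IsProbabilityMeasure P] [IsProbabilityMeasure Pt]
    (hmarg : ∀ S : Set (Fin d), S ≠ Set.univ →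
      P.map (fun x (j : S) => x j) = Pt.map (fun x (j : S) => x j))
    (n : ℕ) :
    dKL (jointLaw P K n) (jointLaw Pt K n)
      ≤ (n : ℝ) * (∏ j, (Real.exp (α j) - 1)) ^ 2 * (dTV P Pt) ^ 2 := by
  have hP := prob_jointLaw P K hker n
  have hPt := prob_jointLaw Pt K hker n
  set ε := (∏ j, (Real.exp (α j) - 1)) * dTV P Pt with hε
  have he : 0 ≤ ε := by
    refine mul_nonneg (Finset.prod_nonneg fun j _ => ?_) (dTV_nonneg _ _)
    have := Real.one_le_exp (hα j); linarith
  have hdom : L2Dom (jointLaw Pt K n) (jointLaw P K n)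
      ((1 + ((ε.toNNReal : ℝ≥0) : ℝ≥0∞) ^ 2) ^ n) := by
    clear hP hPt
    induction n with
    | zero =>
      intro f hf
      rw [jointLaw, jointLaw, lintegral_dirac' _ hf, lintegral_dirac' _ (hf.pow_const 2)]
      simp
    | succ n ih =>
      rw [jointLaw, jointLaw, pow_succ]
      refine L2Dom.bind ih _ _ (measurable_step Pt n (K n) (hker n))
        (measurable_step P n (K n) (hker n)) fun hist => ?_
      refine L2Dom.map ?_ (measurable_snoc.comp (measurable_const.prodMk measurable_id))
      exact one_step hd X Z α hα (fun j x => K n j x hist)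
        (fun j A hA => (hker n j A hA).comp (measurable_id.prodMk measurable_const))
        (fun j x x' A hA => hLDP n j x x' hist A hA) P Pt hmarg
  have hdom' : L2Dom (jointLaw Pt K n) (jointLaw P K n)
      (((1 + ε.toNNReal ^ 2) ^ n : ℝ≥0) : ℝ≥0∞) := by
    have e : (((1 + ε.toNNReal ^ 2) ^ n : ℝ≥0) : ℝ≥0∞)
        = (1 + ((ε.toNNReal : ℝ≥0) : ℝ≥0∞) ^ 2) ^ n := by push_cast; rfl
    rw [e]; exact hdom
  have hfin := L2Dom.dKL_le (one_le_pow₀ (le_add_of_nonneg_right zero_le)) hdom'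
  refine hfin.trans ?_
  have hcoe : (((1 + ε.toNNReal ^ 2) ^ n : ℝ≥0) : ℝ) = (1 + ε ^ 2) ^ n := by
    push_cast
    rw [Real.coe_toNNReal _ he]
  rw [hcoe, Real.log_pow, mul_assoc, ← mul_pow, ← hε]
  refine mul_le_mul_of_nonneg_left ?_ (Nat.cast_nonneg n)
  have := Real.log_le_sub_one_of_pos (show 0 < 1 + ε ^ 2 by positivity)
  linarith
end
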